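/- Over a regular local ring R of Krull dimension n, any exact differential module (H(D) = 0) whose underlying R-module D is finitely generated and free is contractible: there exists an R-linear map h : D → D with d^D h + h d^D = id_D. (Key step: from the exact sequence 0 → B(D) → D → D → ⋯ → D → B(D) → 0 of length > dim R, the module of boundaries B(D) is free, so the surjection D → B(D) and inclusion B(D) → D split.) -/

import Mathlib

/-!
Let `B = im d = ker d`. If `x ∈ 𝔪` is a nonzerodivisor on `M`, then it is one on `B ⊆ M`, and on
the cokernel `M ⧸ B ≅ B ⊆ M`; hence `d` stays exact on `M ⧸ xM` and its boundaries there are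
`B ⧸ xB`, so `B` is free over `R` as soon as they are free over `R ⧸ x`. For `x ∈ 𝔪 \ 𝔪²` the ring
`R ⧸ x` is again regular of smaller embedding dimension, so by induction down to a field `B` is
free. Then `M → B` splits, and a splitting yields the contracting homotopy.

Such an `x` is a nonzerodivisor because `R` is a domain, by the same induction: if `𝔪` is not
minimal, prime avoidance gives `x ∈ 𝔪 \ 𝔪²` outside every minimal prime. Then `R ⧸ x` is a domain,
so the prime `(x)` contains a minimal prime `P`, and `P = xP` since `x ∉ P`; by Nakayama, `P = 0`.
-/

open IsLocalRing Function
open LinearMap (range)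

section ContractingHomotopy

variable {R M : Type*} [Ring R] [AddCommGroup M] [Module R M]

theorem exists_contracting_homotopy_of_projective_range {d : M →ₗ[R] M} (hd : Exact d d)
    [Module.Projective R (range d)] : ∃ h : M →ₗ[R] M, d ∘ₗ h + h ∘ₗ d = LinearMap.id := by
  obtain ⟨σ, hσ⟩ := Module.projective_lifting_property d.rangeRestrict LinearMap.id
    d.surjective_rangeRestrict
  have d_σ (b : range d) : d (σ b) = b := congrArg Subtype.val (LinearMap.congr_fun hσ b)
  have d_d (m : M) : d (d m) = 0 := hd.apply_apply_eq_zero m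
  have sub_mem (m : M) : m - σ (d.rangeRestrict m) ∈ range d :=
    (hd _).1 (by rw [map_sub, d_σ]; exact sub_self (d m))
  let π : M →ₗ[R] range d := (LinearMap.id - σ ∘ₗ d.rangeRestrict).codRestrict (range d) sub_mem
  have π_d (m : M) : π (d m) = d.rangeRestrict m := by
    have boundary_d : d.rangeRestrict (d m) = 0 := Subtype.ext (d_d m)
    ext
    simp [π, boundary_d]
  refine ⟨σ ∘ₗ π, LinearMap.ext fun m ↦ ?_⟩
  calc d (σ (π m)) + σ (π (d m))
      = (m - σ (d.rangeRestrict m)) + σ (d.rangeRestrict m) := by rw [d_σ, π_d]; rfl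
    _ = m := sub_add_cancel _ _

end ContractingHomotopy

section ReductionModuloRegularElement

variable {R M N P Q : Type*} [CommRing R] [AddCommGroup M] [Module R M] [AddCommGroup N]
  [Module R N] [AddCommGroup P] [Module R P] [AddCommGroup Q] [Module R Q]

/-- The reduction `M ⧸ xM → N ⧸ xN` of a linear map, as a map of `R ⧸ (x)`-modules;
`QuotSMulTop.map` is only `R`-linear. -/
def quotSMulTopMap (x : R) (f : M →ₗ[R] N) :
    QuotSMulTop x M →ₗ[R ⧸ Ideal.span {x}] QuotSMulTop x N :=
  (QuotSMulTop.map x f).extendScalarsOfSurjective Ideal.Quotient.mk_surjective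

theorem coe_quotSMulTopMap (x : R) (f : M →ₗ[R] N) :
    ⇑(quotSMulTopMap x f) = QuotSMulTop.map x f :=
  rfl

theorem quotSMulTopMap_comp (x : R) (g : N →ₗ[R] P) (f : M →ₗ[R] N) :
    quotSMulTopMap x (g ∘ₗ f) = quotSMulTopMap x g ∘ₗ quotSMulTopMap x f :=
  LinearMap.ext fun m ↦ LinearMap.congr_fun (QuotSMulTop.map_comp x g f) m

theorem exact_quotSMulTopMap {x : R} {f : M →ₗ[R] N} {g : N →ₗ[R] P} {h : P →ₗ[R] Q}
    (hfg : Exact f g) (hgh : Exact g h) (hx : IsSMulRegular Q x) :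
    Exact (quotSMulTopMap x f) (quotSMulTopMap x g) := by
  rw [coe_quotSMulTopMap, coe_quotSMulTopMap]
  exact QuotSMulTop.map_first_exact_on_four_term_exact_of_isSMulRegular_last hfg hgh hx

theorem quotSMulTopMap_injective {x : R} {f : M →ₗ[R] N} {g : N →ₗ[R] P} (hf : Injective f)
    (hfg : Exact f g) (hx : IsSMulRegular P x) : Injective (quotSMulTopMap x f) := by
  have exact_zero : Exact (0 : M →ₗ[R] M) f := (LinearMap.exact_zero_iff_injective M f).2 hf
  have exact_map_zero := exact_quotSMulTopMap exact_zero hfg hx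
  rw [coe_quotSMulTopMap, map_zero] at exact_map_zero
  exact (LinearMap.exact_zero_iff_injective _ _).1 exact_map_zero

theorem range_quotSMulTopMap_subtype_range (x : R) (f : M →ₗ[R] N) :
    range (quotSMulTopMap x (range f).subtype) = range (quotSMulTopMap x f) := by
  have surjective : Surjective (quotSMulTopMap x f.rangeRestrict) :=
    QuotSMulTop.map_surjective x f.surjective_rangeRestrict
  rw [← LinearMap.range_comp_of_range_eq_top _ (LinearMap.range_eq_top.2 surjective),
    ← quotSMulTopMap_comp]
  rfl

theorem free_range_of_free_range_quotSMulTopMap {x : R} (hx : x ∈ (⊥ : Ideal R).jacobson)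
    (hxN : IsSMulRegular N x) (hxP : IsSMulRegular P x) {f : M →ₗ[R] N} {g : N →ₗ[R] P}
    (hfg : Exact f g) [Module.FinitePresentation R (range f)]
    [Module.Free (R ⧸ Ideal.span {x}) (range (quotSMulTopMap x f))] :
    Module.Free R (range f) := by
  have injective : Injective (quotSMulTopMap x (range f).subtype) :=
    quotSMulTopMap_injective (range f).injective_subtype
      (LinearMap.exact_iff.2 (by rw [hfg.linearMap_ker_eq, Submodule.range_subtype])) hxP
  let e : QuotSMulTop x (range f) ≃ₗ[R ⧸ Ideal.span {x}] range (quotSMulTopMap x f) :=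
    (LinearEquiv.ofInjective _ injective).trans
      (LinearEquiv.ofEq _ _ (range_quotSMulTopMap_subtype_range x f))
  exact (Module.free_quotSMulTop_iff_free R (range f) hx (hxN.submodule _ x)).1
    (Module.Free.of_equiv e.symm)

end ReductionModuloRegularElement

section LocalRing

variable {R : Type*} [CommRing R] [IsLocalRing R]

theorem exists_mem_span_insert_erase {M : Type*} [AddCommGroup M] [Module R M] [DecidableEq M]
    {s : Finset M} {x : M} (hx : x ∈ Submodule.span R (s : Set M))
    (hx' : x ∉ maximalIdeal R • Submodule.span R (s : Set M)) :
    ∃ y ∈ s, y ∈ Submodule.span R (insert x (s.erase y) : Set M) := by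
  obtain ⟨a, -, rfl⟩ := Submodule.mem_span_finset.1 hx
  obtain ⟨y, hys, hay⟩ : ∃ y ∈ s, IsUnit (a y) := by
    by_contra! nonunit
    exact hx' (Submodule.sum_mem _ fun y hy ↦
      Submodule.smul_mem_smul ((mem_maximalIdeal _).2 (nonunit y hy)) (Submodule.subset_span hy))
  refine ⟨y, hys, (Submodule.smul_mem_iff_of_isUnit _ hay).1 ?_⟩
  rw [eq_sub_of_add_eq (Finset.add_sum_erase s (fun z ↦ a z • z) hys)]
  exact Submodule.sub_mem _ (Submodule.subset_span (Set.mem_insert _ _))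
    (Submodule.sum_mem _ fun z hz ↦ Submodule.smul_mem _ _
      (Submodule.subset_span (Set.mem_insert_of_mem _ hz)))

theorem maximalIdeal_quotient_span_singleton_eq_span_image [DecidableEq R] {x y : R} {s : Finset R}
    (hs : Ideal.span (s : Set R) = maximalIdeal R)
    (hy : y ∈ Ideal.span (insert x (s.erase y) : Set R)) [IsLocalRing (R ⧸ Ideal.span {x})] :
    maximalIdeal (R ⧸ Ideal.span {x}) =
      Ideal.span (Ideal.Quotient.mk (Ideal.span {x}) '' (s.erase y)) := by
  rw [← map_maximalIdeal_of_surjective _ Ideal.Quotient.mk_surjective, ← Ideal.map_span]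
  refine le_antisymm (Ideal.map_le_iff_le_comap.2 ?_)
    (Ideal.map_mono (hs ▸ Ideal.span_mono (Finset.erase_subset y s)))
  have span_le : Ideal.span (insert x (s.erase y) : Set R) ≤
      ((Ideal.span (s.erase y : Set R)).map (Ideal.Quotient.mk (Ideal.span {x}))).comap
        (Ideal.Quotient.mk (Ideal.span {x})) := by
    rw [Ideal.span_insert, Ideal.comap_map_of_surjective _ Ideal.Quotient.mk_surjective,
      ← RingHom.ker_eq_comap_bot, Ideal.mk_ker, sup_comm]
  rw [← hs, Ideal.span_le]
  intro z hz
  obtain rfl | hzy := eq_or_ne z y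
  · exact span_le hy
  · exact span_le (Ideal.subset_span (Set.mem_insert_of_mem _ (Finset.mem_erase.2 ⟨hzy, hz⟩)))

variable [IsNoetherianRing R]

theorem spanFinrank_maximalIdeal_quotient_span_singleton_lt {x : R} (hx : x ∈ maximalIdeal R)
    (hx' : x ∉ maximalIdeal R ^ 2) [IsLocalRing (R ⧸ Ideal.span {x})] :
    (maximalIdeal (R ⧸ Ideal.span {x})).spanFinrank < (maximalIdeal R).spanFinrank := by
  classical
  obtain ⟨s, hcard, hs⟩ :=
    Submodule.FG.exists_span_finset_card_eq_spanFinrank (IsNoetherian.noetherian (maximalIdeal R))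
  obtain ⟨y, hys, hy⟩ := exists_mem_span_insert_erase (s := s) (x := x) (hs ▸ hx)
    (by rwa [hs, smul_eq_mul, ← sq])
  calc (maximalIdeal (R ⧸ Ideal.span {x})).spanFinrank
      ≤ (Ideal.Quotient.mk (Ideal.span {x}) '' (s.erase y)).ncard := by
        rw [maximalIdeal_quotient_span_singleton_eq_span_image hs hy]
        exact Submodule.spanFinrank_span_le_ncard_of_finite ((s.erase y).finite_toSet.image _)
    _ ≤ (s.erase y).card :=
        (Set.ncard_image_le (s.erase y).finite_toSet).trans_eq (Set.ncard_coe_finset _)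
    _ < s.card := Finset.card_erase_lt_of_mem hys
    _ = (maximalIdeal R).spanFinrank := hcard

theorem exists_mem_maximalIdeal_notMem_sq (hR : ¬ IsField R) :
    ∃ x ∈ maximalIdeal R, x ∉ maximalIdeal R ^ 2 := by
  by_contra! le_sq
  refine hR (isField_iff_maximalIdeal_eq.2 ?_)
  refine Submodule.eq_bot_of_le_smul_of_le_jacobson_bot (maximalIdeal R) _
    (IsNoetherian.noetherian _) ?_ (maximalIdeal_le_jacobson _)
  rwa [smul_eq_mul, ← sq]

theorem exists_mem_maximalIdeal_notMem_sq_notMem_minimalPrimes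
    (hR : maximalIdeal R ∉ minimalPrimes R) :
    ∃ x ∈ maximalIdeal R, x ∉ maximalIdeal R ^ 2 ∧ ∀ P ∈ minimalPrimes R, x ∉ P := by
  have not_isField : ¬ IsField R := fun h ↦ hR (by
    let := h.toField
    rw [isField_iff_maximalIdeal_eq.1 h, IsDomain.minimalPrimes_eq_singleton_bot]
    rfl)
  have not_subset : ¬ (maximalIdeal R : Set R) ⊆
      ⋃ I ∈ insert (maximalIdeal R ^ 2) (minimalPrimes R), (I : Set R) := by
    intro subset
    obtain ⟨I, rfl | hI, le⟩ := (Ideal.subset_union_prime_finite (f := id)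
      ((minimalPrimes.finite_of_isNoetherianRing R).insert _) (maximalIdeal R ^ 2)
      (maximalIdeal R ^ 2)
      fun _ hI hne _ ↦ (hI.resolve_left hne).1.1).1 subset
    · obtain ⟨x, hx, hx'⟩ := exists_mem_maximalIdeal_notMem_sq not_isField
      exact hx' (le hx)
    · have := hI.1.1
      exact hR (le_antisymm le (le_maximalIdeal this.ne_top) ▸ hI)
  obtain ⟨x, hx, hx'⟩ := Set.not_subset.1 not_subset
  simp only [Set.mem_iUnion, not_exists, SetLike.mem_coe] at hx'
  exact ⟨x, hx, hx' _ (Set.mem_insert _ _), fun P hP ↦ hx' P (Set.mem_insert_of_mem _ hP)⟩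

theorem isDomain_of_isPrime_span_singleton {x : R} [(Ideal.span {x}).IsPrime]
    (hx : ∀ P ∈ minimalPrimes R, x ∉ P) : IsDomain R := by
  obtain ⟨P, hP, P_le⟩ := Ideal.exists_minimalPrimes_le (bot_le : ⊥ ≤ Ideal.span {x})
  have : P.IsPrime := hP.1.1
  have le_smul : P ≤ Ideal.span {x} • P := by
    intro p hp
    obtain ⟨a, rfl⟩ := Ideal.mem_span_singleton'.1 (P_le hp)
    rw [mul_comm]
    exact Submodule.smul_mem_smul (Ideal.mem_span_singleton_self x)
      ((this.mem_or_mem hp).resolve_right (hx P hP))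
  have P_eq_bot : P = ⊥ :=
    Submodule.eq_bot_of_le_smul_of_le_jacobson_bot _ P (IsNoetherian.noetherian P) le_smul
      ((le_maximalIdeal Ideal.IsPrime.ne_top').trans (maximalIdeal_le_jacobson _))
  subst P_eq_bot
  exact IsDomain.of_bot_isPrime R

end LocalRing

section RegularLocalRing

universe u v

theorem isRegularLocalRing_quotient_span_singleton {R : Type*} [CommRing R] [IsRegularLocalRing R]
    {x : R} (hx : x ∈ maximalIdeal R) (hx' : x ∉ maximalIdeal R ^ 2) :
    IsRegularLocalRing (R ⧸ Ideal.span {x}) := by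
  have : Nontrivial (R ⧸ Ideal.span {x}) := Ideal.Quotient.nontrivial_iff.2
    (Ideal.span_singleton_ne_top hx)
  have : IsLocalRing (R ⧸ Ideal.span {x}) := .of_surjective' _ Ideal.Quotient.mk_surjective
  refine .of_spanFinrank_maximalIdeal_le _ (ENat.WithBot.add_le_add_one_right_iff.1 ?_)
  calc ((maximalIdeal (R ⧸ Ideal.span {x})).spanFinrank + 1 : WithBot ℕ∞)
      ≤ (maximalIdeal R).spanFinrank := by
        exact_mod_cast spanFinrank_maximalIdeal_quotient_span_singleton_lt hx hx'
    _ = (maximalIdeal R).height := by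
        rw [IsRegularLocalRing.spanFinrank_maximalIdeal, maximalIdeal_height_eq_ringKrullDim]
    _ ≤ ringKrullDim (R ⧸ Ideal.span {x}) + 1 := Ideal.height_le_ringKrullDim_quotient_add_one hx

theorem regularLocalRing_induction {motive : ∀ (R : Type u) [CommRing R], Prop}
    (step : ∀ (R : Type u) [CommRing R] [IsRegularLocalRing R],
      (∀ x ∈ maximalIdeal R, x ∉ maximalIdeal R ^ 2 → motive (R ⧸ Ideal.span {x})) → motive R)
    (R : Type u) [CommRing R] [IsRegularLocalRing R] : motive R := by
  induction hn : (maximalIdeal R).spanFinrank using Nat.strong_induction_on generalizing R with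
  | _ n ih =>
    subst hn
    refine step R fun x hx hx' ↦ ?_
    have := isRegularLocalRing_quotient_span_singleton hx hx'
    exact ih _ (spanFinrank_maximalIdeal_quotient_span_singleton_lt hx hx') _ rfl

theorem isField_of_maximalIdeal_mem_minimalPrimes {R : Type*} [CommRing R] [IsRegularLocalRing R]
    (hR : maximalIdeal R ∈ minimalPrimes R) : IsField R := by
  have spanFinrank_eq_zero : ((maximalIdeal R).spanFinrank : WithBot ℕ∞) = 0 := by
    rw [IsRegularLocalRing.spanFinrank_maximalIdeal, ← maximalIdeal_height_eq_ringKrullDim,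
      Ideal.height_eq_zero_iff.2 hR]
    rfl
  rw [isField_iff_maximalIdeal_eq,
    ← Submodule.spanFinrank_eq_zero_iff_eq_bot (IsNoetherian.noetherian _)]
  exact_mod_cast spanFinrank_eq_zero

theorem isDomain_of_isRegularLocalRing (R : Type*) [CommRing R] [IsRegularLocalRing R] :
    IsDomain R := by
  refine regularLocalRing_induction (motive := fun R _ ↦ IsDomain R) (fun R _ _ ih ↦ ?_) R
  by_cases hR : maximalIdeal R ∈ minimalPrimes R
  · exact (isField_of_maximalIdeal_mem_minimalPrimes hR).isDomain
  obtain ⟨x, hx, hx', hmin⟩ := exists_mem_maximalIdeal_notMem_sq_notMem_minimalPrimes hR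
  have := (Ideal.Quotient.isDomain_iff_prime (Ideal.span {x})).1 (ih x hx hx')
  exact isDomain_of_isPrime_span_singleton hmin

theorem free_range_of_exact (R : Type u) [CommRing R] [IsRegularLocalRing R] (M : Type v)
    [AddCommGroup M] [Module R M] [Module.Finite R M] [Module.Free R M] (d : M →ₗ[R] M)
    (hd : Exact d d) : Module.Free R (range d) := by
  refine regularLocalRing_induction (motive := fun R _ ↦ ∀ (M : Type v) [AddCommGroup M]
    [Module R M] [Module.Finite R M] [Module.Free R M] (d : M →ₗ[R] M), Exact d d →
    Module.Free R (range d)) (fun R _ _ ih M _ _ _ _ d hd ↦ ?_) R M d hd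
  by_cases hR : IsField R
  · let := hR.toField
    exact Module.Free.of_divisionRing R (range d)
  obtain ⟨x, hx, hx'⟩ := exists_mem_maximalIdeal_notMem_sq hR
  have := isDomain_of_isRegularLocalRing R
  have x_ne_zero : x ≠ 0 := fun h ↦ hx' (h ▸ Submodule.zero_mem _)
  have x_regular : IsSMulRegular M x := smul_right_injective M x_ne_zero
  have := Module.Finite.of_restrictScalars_finite R (R ⧸ Ideal.span {x}) (QuotSMulTop x M)
  have := ih x hx hx' (QuotSMulTop x M) _ (exact_quotSMulTopMap hd hd x_regular)
  have := Module.finitePresentation_of_finite R (range d)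
  exact free_range_of_free_range_quotSMulTopMap (maximalIdeal_le_jacobson _ hx) x_regular x_regular
    hd

end RegularLocalRing

/-- Over a regular local (Noetherian) ring `R` — expressed by saying
that the maximal ideal is generated by `n` elements where `n` is the Krull dimension of
`R` — every exact differential module `(M, d)` whose underlying module is finitely
generated and free is contractible: there is `h : M → M` with `d h + h d = id`. -/
theorem exact_free_differential_module_contractible_over_regular_local
    {R : Type*} [CommRing R] [IsNoetherianRing R] [IsLocalRing R]
    (n : ℕ) (hdim : ringKrullDim R = n)
    (s : Finset R) (hcard : s.card = n)
    (hreg : Ideal.span (s : Set R) = IsLocalRing.maximalIdeal R)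
    {M : Type*} [AddCommGroup M] [Module R M] [Module.Finite R M] [Module.Free R M]
    (d : M →ₗ[R] M) (hd2 : d ∘ₗ d = 0)
    (hexact : LinearMap.ker d = LinearMap.range d) :
    ∃ h : M →ₗ[R] M, d ∘ₗ h + h ∘ₗ d = LinearMap.id := by
  have spanFinrank_le : (maximalIdeal R).spanFinrank ≤ n := by
    rw [← hreg, ← hcard, ← Set.ncard_coe_finset]
    exact Submodule.spanFinrank_span_le_ncard_of_finite s.finite_toSet
  have : IsRegularLocalRing R :=
    .of_spanFinrank_maximalIdeal_le R (hdim ▸ by exact_mod_cast spanFinrank_le)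
  have hd : Exact d d := LinearMap.exact_iff.2 hexact
  have := free_range_of_exact R M d hd
  exact exists_contracting_homotopy_of_projective_range hd
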